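/- Let σ: ℂ → ℝ be smooth, h: ℂ → ℝ smooth with compact support, and for a compactly supported smooth test function φ define F(ε) = ∫ h R_{g_ε} dv_{g_ε} where the metric g_ε has inverse components g_ε^{zz̄} = 2e^{−σ}, g_ε^{zz} = εφ (and conjugate). Then dF/dε at ε = 0 equals ∫ (−∂_z²h + ∂_zσ ∂_z h) φ e^σ d²z. -/

import Mathlib

open MeasureTheory

/-- Partial derivative ∂_i in the coordinates (x¹,x²) on ℂ ≅ ℝ². -/
noncomputable def pd (i : Fin 2) (f : ℂ → ℝ) (z : ℂ) : ℝ :=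
  fderiv ℝ f z (if i = 0 then 1 else Complex.I)

/-- Christoffel symbols Γ^a_{bc} of a metric g on ℂ ≅ ℝ². -/
noncomputable def christoffel (g : ℂ → Matrix (Fin 2) (Fin 2) ℝ)
    (a b c : Fin 2) (z : ℂ) : ℝ :=
  (1/2) * ∑ d : Fin 2, (g z)⁻¹ a d *
    (pd b (fun w => g w d c) z + pd c (fun w => g w d b) z - pd d (fun w => g w b c) z)

/-- Riemann curvature tensor R^a_{bcd}. -/
noncomputable def riemann (g : ℂ → Matrix (Fin 2) (Fin 2) ℝ)
    (a b c d : Fin 2) (z : ℂ) : ℝ :=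
  pd c (fun w => christoffel g a b d w) z - pd d (fun w => christoffel g a b c w) z +
    ∑ l : Fin 2, (christoffel g a l c z * christoffel g l b d z -
      christoffel g a l d z * christoffel g l b c z)

/-- Scalar curvature R_g = g^{bd} R^a_{bad}. -/
noncomputable def scalarCurv (g : ℂ → Matrix (Fin 2) (Fin 2) ℝ) (z : ℂ) : ℝ :=
  ∑ b : Fin 2, ∑ d : Fin 2, (g z)⁻¹ b d * (∑ a : Fin 2, riemann g a b a d z)

/-- The inverse metric of the perturbed metric g_ε with complex components
g^{zz̄} = 2e^{−σ}, g^{zz} = (ε₁+iε₂)φ, written as a real 2×2 matrix. -/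
noncomputable def Ainv (σ φ : ℂ → ℝ) (ε₁ ε₂ : ℝ) (z : ℂ) :
    Matrix (Fin 2) (Fin 2) ℝ :=
  !![Real.exp (-(σ z)) + ε₁ * φ z / 2, ε₂ * φ z / 2;
     ε₂ * φ z / 2, Real.exp (-(σ z)) - ε₁ * φ z / 2]

/-- Wirtinger derivative ∂_z = (∂₁ − i∂₂)/2. -/
noncomputable def wz (f : ℂ → ℂ) (z : ℂ) : ℂ :=
  (fderiv ℝ f z 1 - Complex.I * fderiv ℝ f z Complex.I) / 2

/-!
In dimension two the curvature form is exact: a metric `g` has `R dv = -2 dω`, where `ω` is the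
connection form of an orthonormal frame (Liouville), so that `∫ h R dv = 2 ∫ dh ∧ ω`. With
`ψ = φ e^σ`, the perturbed metric is conformal to a flat metric perturbed by a traceless multiple of
`ψ`, which makes `ω` explicit and its first variation at `ε = 0` an expression linear in `ψ` and its
first derivatives. A last integration by parts moves these derivatives onto `dh`.
-/

open Topology

section PartialDerivatives

variable {i j : Fin 2} {f g : ℂ → ℝ} {z : ℂ}

lemma pd_add (hf : DifferentiableAt ℝ f z) (hg : DifferentiableAt ℝ g z) :
    pd i (fun w => f w + g w) z = pd i f z + pd i g z := by
  simp only [pd, fderiv_fun_add hf hg, add_apply]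

lemma pd_sub (hf : DifferentiableAt ℝ f z) (hg : DifferentiableAt ℝ g z) :
    pd i (fun w => f w - g w) z = pd i f z - pd i g z := by
  simp only [pd, fderiv_fun_sub hf hg, sub_apply]

lemma pd_neg : pd i (fun w => -f w) z = -pd i f z := by
  simp only [pd, fderiv_fun_neg, neg_apply]

lemma pd_const (c : ℝ) : pd i (fun _ => c) z = 0 := by
  simp only [pd, fderiv_const_apply, zero_apply]

lemma pd_mul (hf : DifferentiableAt ℝ f z) (hg : DifferentiableAt ℝ g z) :
    pd i (fun w => f w * g w) z = pd i f z * g z + f z * pd i g z := by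
  simp only [pd, fderiv_fun_mul hf hg, add_apply, smul_apply, smul_eq_mul]
  ring

lemma pd_const_mul (c : ℝ) (hf : DifferentiableAt ℝ f z) :
    pd i (fun w => c * f w) z = c * pd i f z := by
  simp only [pd, fderiv_const_mul hf, smul_apply, smul_eq_mul]

lemma pd_comp {φ : ℝ → ℝ} {φ' : ℝ} (hφ : HasDerivAt φ φ' (f z))
    (hf : DifferentiableAt ℝ f z) : pd i (fun w => φ (f w)) z = φ' * pd i f z := by
  have h := (hφ.comp_hasFDerivAt z hf.hasFDerivAt).fderiv
  simp only [Function.comp_def] at h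
  simp only [pd, h, smul_apply, smul_eq_mul]

lemma pd_div (hf : DifferentiableAt ℝ f z) (hg : DifferentiableAt ℝ g z) (h0 : g z ≠ 0) :
    pd i (fun w => f w / g w) z = (pd i f z * g z - f z * pd i g z) / g z ^ 2 := by
  simp only [div_eq_mul_inv]
  rw [pd_mul hf (hg.fun_inv h0), pd_comp (hasDerivAt_inv h0) hg]
  field_simp
  ring

lemma contDiffAt_pd {m n : WithTop ℕ∞} (hf : ContDiffAt ℝ n f z) (hmn : m + 1 ≤ n) :
    ContDiffAt ℝ m (pd i f) z := by
  unfold pd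
  exact (hf.fderiv_right hmn).clm_apply contDiffAt_const

lemma contDiff_pd {m n : WithTop ℕ∞} (hf : ContDiff ℝ n f) (hmn : m + 1 ≤ n) :
    ContDiff ℝ m (pd i f) :=
  contDiff_iff_contDiffAt.2 fun _ => contDiffAt_pd hf.contDiffAt hmn

lemma continuousAt_pd (hf : ContDiffAt ℝ 1 f z) : ContinuousAt (pd i f) z :=
  (contDiffAt_pd (m := 0) hf (by norm_num)).continuousAt

lemma continuous_pd (hf : ContDiff ℝ 1 f) : Continuous (pd i f) :=
  (contDiff_pd (m := 0) hf (by norm_num)).continuous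

lemma tsupport_pd_subset : tsupport (pd i f) ⊆ tsupport f :=
  tsupport_fderiv_apply_subset ℝ _

lemma hasCompactSupport_pd (hf : HasCompactSupport f) : HasCompactSupport (pd i f) :=
  hf.fderiv_apply ℝ _

lemma pd_comm (hf : ContDiffAt ℝ 2 f z) : pd i (pd j f) z = pd j (pd i f) z := by
  have hd : DifferentiableAt ℝ (fderiv ℝ f) z :=
    (hf.fderiv_right (m := 1) (by norm_num)).differentiableAt one_ne_zero
  have hpd (k l : Fin 2) : pd k (pd l f) z = fderiv ℝ (fderiv ℝ f) z
      (if k = 0 then 1 else Complex.I) (if l = 0 then 1 else Complex.I) := by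
    unfold pd
    rw [fderiv_clm_apply hd (differentiableAt_const _)]
    simp
  rw [hpd, hpd, (hf.isSymmSndFDerivAt (by simp)).eq]

end PartialDerivatives

section Curvature

/-- `g` is a symmetric matrix field which at `z` is `C²` and positive definite, by Sylvester's
criterion: the pointwise conditions under which curvature at `z` is computed. -/
structure IsRiemannianAt (g : ℂ → Matrix (Fin 2) (Fin 2) ℝ) (z : ℂ) : Prop where
  isSymm : ∀ w, (g w).IsSymm
  contDiffAt : ∀ i j, ContDiffAt ℝ 2 (fun w => g w i j) z
  pos : 0 < g z 0 0
  det_pos : 0 < (g z).det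

/-- The connection form `ω = (√det g / g₀₀) Γ¹₀ᵢ dxⁱ` of Liouville's curvature formula; it is
the connection form of the orthonormal frame whose first vector is parallel to `∂₀`. -/
noncomputable def connectionForm (g : ℂ → Matrix (Fin 2) (Fin 2) ℝ) (i : Fin 2) (z : ℂ) : ℝ :=
  √(g z).det / g z 0 0 * christoffel g 1 0 i z

variable {g : ℂ → Matrix (Fin 2) (Fin 2) ℝ} {z : ℂ}

lemma sum_mul_christoffel (hg : IsUnit (g z).det) (a b c : Fin 2) :
    ∑ l, g z a l * christoffel g l b c z =
      (pd b (fun w => g w a c) z + pd c (fun w => g w a b) z - pd a (fun w => g w b c) z) / 2 := by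
  set κ : Fin 2 → ℝ := fun d =>
    pd b (fun w => g w d c) z + pd c (fun w => g w d b) z - pd d (fun w => g w b c) z
  have hΓ : (fun l => christoffel g l b c z) = (1 / 2 : ℝ) • (g z)⁻¹.mulVec κ := by
    ext l
    simp only [christoffel, Matrix.mulVec, dotProduct, Pi.smul_apply, smul_eq_mul, κ]
  calc ∑ l, g z a l * christoffel g l b c z
      = (g z).mulVec (fun l => christoffel g l b c z) a := rfl
    _ = κ a / 2 := by
        rw [hΓ, Matrix.mulVec_smul, Matrix.mulVec_mulVec, Matrix.mul_nonsing_inv _ hg,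
          Matrix.one_mulVec, Pi.smul_apply, smul_eq_mul]
        ring

lemma pd_metric (hg : ∀ w, (g w).IsSymm) (hdet : IsUnit (g z).det) (a b c : Fin 2) :
    pd c (fun w => g w a b) z =
      ∑ l, (g z a l * christoffel g l b c z + g z b l * christoffel g l a c z) := by
  rw [Finset.sum_add_distrib, sum_mul_christoffel hdet, sum_mul_christoffel hdet,
    funext fun w => (hg w).apply a b]
  ring

namespace IsRiemannianAt

variable (hg : IsRiemannianAt g z)
include hg

lemma isUnit_det : IsUnit (g z).det := hg.det_pos.ne'.isUnit

lemma differentiableAt (i j : Fin 2) : DifferentiableAt ℝ (fun w => g w i j) z :=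
  (hg.contDiffAt i j).differentiableAt two_ne_zero

lemma contDiffAt_det : ContDiffAt ℝ 2 (fun w => (g w).det) z := by
  have := hg.contDiffAt
  simp only [Matrix.det_fin_two]
  fun_prop

lemma eventually_isUnit_det : ∀ᶠ w in 𝓝 z, IsUnit (g w).det :=
  (hg.contDiffAt_det.continuousAt.eventually_ne hg.det_pos.ne').mono fun _ h => h.isUnit

lemma contDiffAt_inv (a b : Fin 2) : ContDiffAt ℝ 2 (fun w => (g w)⁻¹ a b) z := by
  have hadj : ContDiffAt ℝ 2 (fun w => (g w).adjugate a b) z := by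
    have := hg.contDiffAt
    simp only [Matrix.adjugate_fin_two]
    fin_cases a <;> fin_cases b <;> simpa using by fun_prop
  simp only [Matrix.inv_def, Matrix.smul_apply, Ring.inverse_eq_inv', smul_eq_mul]
  exact (hg.contDiffAt_det.inv hg.det_pos.ne').mul hadj

lemma contDiffAt_christoffel (a b c : Fin 2) : ContDiffAt ℝ 1 (christoffel g a b c) z := by
  have hinv (d : Fin 2) : ContDiffAt ℝ 1 (fun w => (g w)⁻¹ a d) z :=
    (hg.contDiffAt_inv a d).of_le one_le_two
  have hpd (i j k : Fin 2) : ContDiffAt ℝ 1 (pd i fun w => g w j k) z :=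
    contDiffAt_pd (hg.contDiffAt j k) (by norm_num)
  exact contDiffAt_const.mul (ContDiffAt.sum fun d _ =>
    (hinv d).mul (((hpd _ _ _).add (hpd _ _ _)).sub (hpd _ _ _)))

lemma contDiffAt_connectionForm (i : Fin 2) : ContDiffAt ℝ 1 (connectionForm g i) z := by
  have hdet := hg.contDiffAt_det.of_le one_le_two
  have hg₀ := (hg.contDiffAt 0 0).of_le one_le_two
  exact ((hdet.sqrt hg.det_pos.ne').div hg₀ hg.pos.ne').mul (hg.contDiffAt_christoffel 1 0 i)

lemma pd_pd_metric (a b c d : Fin 2) :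
    pd d (pd c fun w => g w a b) z =
      ∑ l, (pd d (fun w => g w a l) z * christoffel g l b c z +
        g z a l * pd d (christoffel g l b c) z +
        (pd d (fun w => g w b l) z * christoffel g l a c z +
        g z b l * pd d (christoffel g l a c) z)) := by
  have hcompat : pd c (fun w => g w a b) =ᶠ[𝓝 z] fun w =>
      ∑ l, (g w a l * christoffel g l b c w + g w b l * christoffel g l a c w) :=
    hg.eventually_isUnit_det.mono fun w hw => pd_metric hg.isSymm hw a b c
  have hd := hg.differentiableAt
  have hΓ (a b c : Fin 2) := (hg.contDiffAt_christoffel a b c).differentiableAt one_ne_zero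
  rw [pd, hcompat.fderiv_eq, ← pd]
  simp only [Fin.sum_univ_two]
  simp (disch := fun_prop) only [pd_add, pd_mul]

/-- The mixed second derivatives of `g` commute, so the curvature acts on the metric by zero. -/
lemma riemann_antisymm (a b c d : Fin 2) :
    ∑ l, (g z a l * riemann g l b c d z + g z b l * riemann g l a c d z) = 0 := by
  have hcomm : pd d (pd c fun w => g w a b) z = pd c (pd d fun w => g w a b) z :=
    pd_comm (hg.contDiffAt a b)
  have hsymm : g z 1 0 = g z 0 1 := (hg.isSymm z).apply 0 1
  rw [hg.pd_pd_metric, hg.pd_pd_metric] at hcomm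
  simp only [pd_metric hg.isSymm hg.isUnit_det, Fin.sum_univ_two] at hcomm
  simp only [riemann, Fin.sum_univ_two]
  linear_combination -hcomm + (christoffel g 0 b d z * christoffel g 1 a c z -
    christoffel g 0 b c z * christoffel g 1 a d z - christoffel g 1 b d z * christoffel g 0 a c z +
    christoffel g 1 b c z * christoffel g 0 a d z) * hsymm

lemma pd_det (i : Fin 2) : pd i (fun w => (g w).det) z =
    2 * (g z).det * (christoffel g 0 0 i z + christoffel g 1 1 i z) := by
  have hsymm : g z 1 0 = g z 0 1 := (hg.isSymm z).apply 0 1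
  have hd := hg.differentiableAt
  simp only [Matrix.det_fin_two]
  simp (disch := fun_prop) only [pd_sub, pd_mul]
  simp only [pd_metric hg.isSymm hg.isUnit_det, Fin.sum_univ_two, hsymm]
  ring

lemma pd_connectionForm (i j : Fin 2) : pd i (connectionForm g j) z = √(g z).det / g z 0 0 *
    (pd i (christoffel g 1 0 j) z + (christoffel g 1 1 i z - christoffel g 0 0 i z -
      2 * g z 0 1 / g z 0 0 * christoffel g 1 0 i z) * christoffel g 1 0 j z) := by
  have hdet : DifferentiableAt ℝ (fun w => (g w).det) z :=
    hg.contDiffAt_det.differentiableAt two_ne_zero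
  have hsqrt := Real.hasDerivAt_sqrt hg.det_pos.ne'
  have hΓ := (hg.contDiffAt_christoffel 1 0 j).differentiableAt one_ne_zero
  have hg₀ := hg.pos.ne'
  have hd := hg.differentiableAt
  have hsqrt_det := hdet.sqrt hg.det_pos.ne'
  have hcoeff : DifferentiableAt ℝ (fun w => √(g w).det / g w 0 0) z := by
    fun_prop (disch := assumption)
  unfold connectionForm
  rw [pd_mul hcoeff hΓ, pd_div hsqrt_det (hd 0 0) hg₀, pd_comp hsqrt hdet, hg.pd_det,
    pd_metric hg.isSymm hg.isUnit_det, Fin.sum_univ_two]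
  have hW := Real.sq_sqrt hg.det_pos.le
  have hW₀ := (Real.sqrt_pos.2 hg.det_pos).ne'
  rw [← hW]
  simp only [Real.sqrt_sq (Real.sqrt_nonneg _)]
  field_simp
  ring

lemma scalarCurv_eq : scalarCurv g z = -2 * riemann g 1 0 0 1 z / g z 0 0 := by
  have hswap (a b : Fin 2) : riemann g a b 1 0 z = -riemann g a b 0 1 z := by
    simp only [riemann, Fin.sum_univ_two]; ring
  have hdiag (a b c : Fin 2) : riemann g a b c c z = 0 := by
    simp only [riemann, Fin.sum_univ_two]; ring
  have hsymm : g z 1 0 = g z 0 1 := (hg.isSymm z).apply 0 1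
  have h₀₀ := hg.riemann_antisymm 0 0 0 1
  have h₀₁ := hg.riemann_antisymm 0 1 0 1
  have hdet := hg.det_pos.ne'
  have hg₀ := hg.pos.ne'
  simp only [Fin.sum_univ_two, hsymm] at h₀₀ h₀₁
  have htrace : scalarCurv g z = (g z 0 0 * riemann g 0 1 0 1 z - g z 0 1 * riemann g 0 0 0 1 z +
      g z 0 1 * riemann g 1 1 0 1 z - g z 1 1 * riemann g 1 0 0 1 z) / (g z).det := by
    simp only [scalarCurv, Fin.sum_univ_two, Matrix.inv_def, Ring.inverse_eq_inv',
      Matrix.adjugate_fin_two, Matrix.smul_apply, smul_eq_mul, Matrix.of_apply, Matrix.cons_val',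
      Matrix.cons_val_zero, Matrix.cons_val_one, Matrix.cons_val_fin_one, hswap, hdiag, hsymm]
    ring
  rw [htrace, div_eq_div_iff hdet hg₀, Matrix.det_fin_two, hsymm]
  linear_combination g z 0 0 * h₀₁ - g z 0 1 * h₀₀

/-- Liouville's formula `R dv = -2 dω`. -/
theorem scalarCurv_mul_sqrt_det : scalarCurv g z * √(g z).det =
    2 * (pd 1 (connectionForm g 0) z - pd 0 (connectionForm g 1) z) := by
  rw [hg.scalarCurv_eq, hg.pd_connectionForm, hg.pd_connectionForm, riemann, Fin.sum_univ_two]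
  ring

end IsRiemannianAt

end Curvature

section Integration

lemma integrable_mul_of_hasCompactSupport {X : Type*} [TopologicalSpace X] [T2Space X]
    [MeasurableSpace X] [OpensMeasurableSpace X] {μ : Measure X} [IsFiniteMeasureOnCompacts μ]
    {h V : X → ℝ} (hh : Continuous h) (hhs : HasCompactSupport h)
    (hV : ContinuousOn V (tsupport h)) : Integrable (fun z => h z * V z) μ := by
  have hsupp : Function.support (fun z => h z * V z) ⊆ tsupport h :=
    (Function.support_mul_subset_left h V).trans (subset_tsupport h)
  exact (integrableOn_iff_integrable_of_support_subset hsupp).1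
    ((hh.continuousOn.mul hV).integrableOn_compact hhs)

lemma integral_mul_pd {h V : ℂ → ℝ} (i : Fin 2) (hh : ContDiff ℝ 1 h) (hhs : HasCompactSupport h)
    (hV : ∀ z ∈ tsupport h, ContDiffAt ℝ 1 V z) :
    ∫ z, h z * pd i V z = -∫ z, pd i h z * V z := by
  have hVc : ContinuousOn V (tsupport h) := fun z hz => (hV z hz).continuousAt.continuousWithinAt
  have hVc' : ContinuousOn (pd i V) (tsupport h) := fun z hz =>
    (continuousAt_pd (hV z hz)).continuousWithinAt
  exact integral_mul_fderiv_eq_neg_fderiv_mul_of_integrable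
    (integrable_mul_of_hasCompactSupport (continuous_pd hh) (hasCompactSupport_pd hhs)
      (hVc.mono tsupport_pd_subset))
    (integrable_mul_of_hasCompactSupport hh.continuous hhs hVc')
    (integrable_mul_of_hasCompactSupport hh.continuous hhs hVc)
    (fun z _ => hh.differentiable one_ne_zero z)
    (fun z hz => (hV z hz).differentiableAt one_ne_zero)

lemma integrable_mul_pd_add_pd_mul {h ψ : ℂ → ℝ} (i : Fin 2) (hh : ContDiff ℝ 1 h)
    (hhs : HasCompactSupport h) (hψ : ContDiff ℝ 1 ψ) :
    Integrable fun z => h z * pd i ψ z + pd i h z * ψ z :=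
  (integrable_mul_of_hasCompactSupport hh.continuous hhs (continuous_pd hψ).continuousOn).add
    (integrable_mul_of_hasCompactSupport (continuous_pd hh) (hasCompactSupport_pd hhs)
      hψ.continuous.continuousOn)

lemma integral_mul_pd_add_pd_mul {h ψ : ℂ → ℝ} (i : Fin 2) (hh : ContDiff ℝ 1 h)
    (hhs : HasCompactSupport h) (hψ : ContDiff ℝ 1 ψ) :
    ∫ z, (h z * pd i ψ z + pd i h z * ψ z) = 0 := by
  rw [integral_add
      (integrable_mul_of_hasCompactSupport hh.continuous hhs (continuous_pd hψ).continuousOn)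
      (integrable_mul_of_hasCompactSupport (continuous_pd hh) (hasCompactSupport_pd hhs)
        hψ.continuous.continuousOn),
    integral_mul_pd i hh hhs fun z _ => hψ.contDiffAt, neg_add_cancel]

lemma integral_mul_scalarCurv {g : ℂ → Matrix (Fin 2) (Fin 2) ℝ} {h : ℂ → ℝ}
    (hh : ContDiff ℝ 1 h) (hhs : HasCompactSupport h)
    (hg : ∀ z ∈ tsupport h, IsRiemannianAt g z) :
    ∫ z, h z * scalarCurv g z * √(g z).det =
      ∫ z, 2 * (pd 0 h z * connectionForm g 1 z - pd 1 h z * connectionForm g 0 z) := by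
  have hω (i : Fin 2) : ∀ z ∈ tsupport h, ContDiffAt ℝ 1 (connectionForm g i) z :=
    fun z hz => (hg z hz).contDiffAt_connectionForm i
  have hint (i j : Fin 2) : Integrable fun z => h z * pd i (connectionForm g j) z :=
    integrable_mul_of_hasCompactSupport hh.continuous hhs fun z hz =>
      (continuousAt_pd (hω j z hz)).continuousWithinAt
  have hint' (i j : Fin 2) : Integrable fun z => pd i h z * connectionForm g j z :=
    integrable_mul_of_hasCompactSupport (continuous_pd hh) (hasCompactSupport_pd hhs) fun z hz =>
      (hω j z (tsupport_pd_subset hz)).continuousAt.continuousWithinAt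
  calc ∫ z, h z * scalarCurv g z * √(g z).det
      = ∫ z, 2 * (h z * pd 1 (connectionForm g 0) z - h z * pd 0 (connectionForm g 1) z) := by
        refine integral_congr_ae (Filter.Eventually.of_forall fun z => ?_)
        by_cases hz : z ∈ tsupport h
        · simp only [mul_assoc, (hg z hz).scalarCurv_mul_sqrt_det]
          ring
        · simp only [image_eq_zero_of_notMem_tsupport hz]
          ring
    _ = 2 * (-∫ z, pd 1 h z * connectionForm g 0 z) -
          2 * (-∫ z, pd 0 h z * connectionForm g 1 z) := by
        rw [integral_const_mul, integral_sub (hint 1 0) (hint 0 1),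
          integral_mul_pd 1 hh hhs (hω 0), integral_mul_pd 0 hh hhs (hω 1), mul_sub]
    _ = _ := by
        rw [integral_const_mul, integral_sub (hint' 0 1) (hint' 1 0)]
        ring

lemma hasDerivAt_setIntegral_of_contDiffAt {X E : Type*} [NormedAddCommGroup X] [NormedSpace ℝ X]
    [MeasurableSpace X] [OpensMeasurableSpace X] [NormedAddCommGroup E] [NormedSpace ℝ E]
    {μ : Measure X} [IsFiniteMeasureOnCompacts μ] {S : Set X} (hS : IsCompact S) {K : ℝ × X → E}
    {k : X → E} {t₀ : ℝ} (hK : ∀ x ∈ S, ContDiffAt ℝ 1 K (t₀, x))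
    (hk : ∀ x ∈ S, HasDerivAt (fun t => K (t, x)) (k x) t₀) :
    HasDerivAt (fun t => ∫ x in S, K (t, x) ∂μ) (∫ x in S, k x ∂μ) t₀ := by
  set K' : ℝ → X → E := fun t x => fderiv ℝ K (t, x) (1, 0)
  have hderiv {t : ℝ} {x : X} (h : ContDiffAt ℝ 1 K (t, x)) :
      HasDerivAt (fun t => K (t, x)) (K' t x) t :=
    ((h.differentiableAt one_ne_zero).hasFDerivAt.comp_hasDerivAt t
      ((hasDerivAt_id t).prodMk (hasDerivAt_const t x)))
  have hK'cont {x : X} (hx : x ∈ S) : ContinuousAt (fun p : ℝ × X => K' p.1 p.2) (t₀, x) :=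
    (((hK x hx).fderiv_right (m := 0) (by norm_num)).clm_apply contDiffAt_const).continuousAt
  have hslice {t : ℝ} {x : X} {f : ℝ × X → E} (hf : ContinuousAt f (t, x)) :
      ContinuousWithinAt (fun x => f (t, x)) S x :=
    (hf.comp (f := fun x => (t, x)) (by fun_prop)).continuousWithinAt
  have hK'on : ContinuousOn (K' t₀) S := fun x hx => hslice (hK'cont hx)
  obtain ⟨C, hC⟩ := hS.exists_bound_of_continuousOn hK'on
  have hsmooth : ∀ᶠ t in 𝓝 t₀, ∀ x ∈ S, ContDiffAt ℝ 1 K (t, x) :=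
    hS.eventually_forall_of_forall_eventually fun x hx => (hK x hx).eventually (by simp)
  have hbound : ∀ᶠ t in 𝓝 t₀, ∀ x ∈ S, ‖K' t x‖ ≤ C + 1 :=
    hS.eventually_forall_of_forall_eventually fun x hx =>
      ((hK'cont hx).norm.eventually_lt_const (lt_add_of_le_of_pos (hC x hx) one_pos)).mono
        fun _ h => h.le
  have hKon {t : ℝ} (ht : ∀ x ∈ S, ContDiffAt ℝ 1 K (t, x)) :
      ContinuousOn (fun x => K (t, x)) S := fun x hx => hslice (ht x hx).continuousAt
  have hrestrict {P : X → Prop} (h : ∀ x ∈ S, P x) : ∀ᵐ x ∂μ.restrict S, P x :=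
    (ae_restrict_iff' hS.measurableSet).2 (Filter.Eventually.of_forall h)
  have hresult := (hasDerivAt_integral_of_dominated_loc_of_deriv_le (F := fun t x => K (t, x))
    (F' := K') (bound := fun _ => C + 1) (hsmooth.and hbound)
    (hsmooth.mono fun t ht => (hKon ht).aestronglyMeasurable_of_isCompact hS hS.measurableSet)
    ((hKon hK).integrableOn_compact hS)
    (hK'on.aestronglyMeasurable_of_isCompact hS hS.measurableSet)
    (hrestrict fun x hx t ht => ht.2 x hx)
    (integrableOn_const hS.measure_ne_top)
    (hrestrict fun x hx t ht => hderiv (ht.1 x hx))).2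
  rwa [setIntegral_congr_fun hS.measurableSet fun x hx => (hderiv (hK x hx)).unique (hk x hx)]
    at hresult

end Integration

section ConformalChange

variable {g : ℂ → Matrix (Fin 2) (Fin 2) ℝ} {ρ : ℂ → ℝ} {z : ℂ}

namespace IsRiemannianAt

lemma connectionForm_eq (hg : IsRiemannianAt g z) (i : Fin 2) : connectionForm g i z =
    (pd 0 (fun w => g w 1 i) z + pd i (fun w => g w 0 1) z - pd 1 (fun w => g w 0 i) z -
      g z 0 1 / g z 0 0 * pd i (fun w => g w 0 0) z) / (2 * √(g z).det) := by
  have hsymm (w : ℂ) : g w 1 0 = g w 0 1 := (hg.isSymm w).apply 0 1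
  have hW := Real.sqrt_pos.2 hg.det_pos
  have hg₀ := hg.pos.ne'
  have hinv : (g z).det⁻¹ = (√(g z).det ^ 2)⁻¹ := by rw [Real.sq_sqrt hg.det_pos.le]
  simp only [connectionForm, christoffel, Fin.sum_univ_two, Matrix.inv_def, Ring.inverse_eq_inv',
    Matrix.adjugate_fin_two, Matrix.smul_apply, smul_eq_mul, Matrix.of_apply, Matrix.cons_val',
    Matrix.cons_val_zero, Matrix.cons_val_one, Matrix.cons_val_fin_one, hsymm, hinv]
  field_simp
  ring

lemma smul (hg : IsRiemannianAt g z) (hρ : ContDiffAt ℝ 2 ρ z) (hρ₀ : 0 < ρ z) :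
    IsRiemannianAt (fun w => ρ w • g w) z where
  isSymm w := (hg.isSymm w).smul (ρ w)
  contDiffAt i j := hρ.mul (hg.contDiffAt i j)
  pos := mul_pos hρ₀ hg.pos
  det_pos := by
    rw [Matrix.det_smul]
    exact mul_pos (pow_pos hρ₀ _) hg.det_pos

/-- The correction is half the Hodge dual of `d log ρ`. -/
lemma connectionForm_smul (hg : IsRiemannianAt g z) (hρ : ContDiffAt ℝ 2 ρ z) (hρ₀ : 0 < ρ z)
    (i : Fin 2) : connectionForm (fun w => ρ w • g w) i z = connectionForm g i z +
      (g z 1 i * pd 0 ρ z - g z 0 i * pd 1 ρ z) / (2 * √(g z).det * ρ z) := by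
  have hd := hg.differentiableAt
  have hdρ := hρ.differentiableAt two_ne_zero
  have hW := (Real.sqrt_pos.2 hg.det_pos).ne'
  have hg₀ := hg.pos.ne'
  rw [(hg.smul hρ hρ₀).connectionForm_eq, hg.connectionForm_eq, Matrix.det_smul,
    Fintype.card_fin, Real.sqrt_mul (sq_nonneg _), Real.sqrt_sq hρ₀.le]
  simp only [Matrix.smul_apply, smul_eq_mul, pd_mul hdρ (hd _ _)]
  field_simp
  fin_cases i
  · simp only [Fin.zero_eta]
    ring
  · simp only [Fin.mk_one, add_sub_cancel_right]
    ring

end IsRiemannianAt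

end ConformalChange

section PerturbedMetric

/-- The flat metric perturbed by the traceless symmetric field `-ψ • !![a, b; b, -a]`. -/
noncomputable def flatPerturbation (a b : ℝ) (ψ : ℂ → ℝ) (z : ℂ) : Matrix (Fin 2) (Fin 2) ℝ :=
  !![1 - a * ψ z, -(b * ψ z); -(b * ψ z), 1 + a * ψ z]

variable {a b : ℝ} {ψ σ φ : ℂ → ℝ} {z : ℂ}

lemma det_flatPerturbation (a b : ℝ) (ψ : ℂ → ℝ) (z : ℂ) :
    (flatPerturbation a b ψ z).det = 1 - (a ^ 2 + b ^ 2) * ψ z ^ 2 := by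
  rw [flatPerturbation, Matrix.det_fin_two_of]
  ring

lemma isRiemannianAt_flatPerturbation (hψ : ContDiffAt ℝ 2 ψ z) (ha : a * ψ z < 1)
    (hdet : 0 < (flatPerturbation a b ψ z).det) :
    IsRiemannianAt (flatPerturbation a b ψ) z where
  isSymm w := by
    ext i j
    fin_cases i <;> fin_cases j <;> rfl
  contDiffAt i j := by
    fin_cases i <;> fin_cases j <;> simpa [flatPerturbation] using by fun_prop
  pos := sub_pos.2 ha
  det_pos := hdet

lemma inv_Ainv (σ φ : ℂ → ℝ) (a b : ℝ) (z : ℂ) :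
    (Ainv σ φ (2 * a) (2 * b) z)⁻¹ =
      (Real.exp (σ z) / (flatPerturbation a b (fun w => φ w * Real.exp (σ w)) z).det) •
        flatPerturbation a b (fun w => φ w * Real.exp (σ w)) z := by
  set ψ : ℂ → ℝ := fun w => φ w * Real.exp (σ w) with hψ
  have hexp := Real.exp_ne_zero (σ z)
  have hA : Ainv σ φ (2 * a) (2 * b) z =
      (Real.exp (σ z))⁻¹ • (flatPerturbation a b ψ z).adjugate := by
    simp only [Ainv, flatPerturbation, Matrix.adjugate_fin_two_of, Matrix.smul_of, Matrix.smul_cons,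
      Matrix.smul_empty, smul_eq_mul, Real.exp_neg, neg_neg, hψ]
    congr! 3 <;> field_simp
  have hdet : (flatPerturbation a b ψ z).adjugate.det = (flatPerturbation a b ψ z).det := by
    rw [Matrix.det_adjugate, Fintype.card_fin, pow_one]
  have hadj : (flatPerturbation a b ψ z).adjugate.adjugate = flatPerturbation a b ψ z := by
    rw [Matrix.adjugate_adjugate _ (by simp), Fintype.card_fin, pow_zero, one_smul]
  rw [hA, Matrix.inv_def, Matrix.adjugate_smul, Matrix.det_smul, hadj, hdet, Fintype.card_fin,
    Ring.inverse_eq_inv', pow_one, smul_smul]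
  congr 1
  field_simp

/-- The `i`-th partial derivative of the logarithm of the conformal factor `exp σ / det` of
`inv_Ainv`. -/
noncomputable def logFactorDeriv (σ ψ : ℂ → ℝ) (a b : ℝ) (i : Fin 2) (z : ℂ) : ℝ :=
  pd i σ z + 2 * (a ^ 2 + b ^ 2) * ψ z * pd i ψ z / (1 - (a ^ 2 + b ^ 2) * ψ z ^ 2)

/-- An explicit formula for the connection form of the inverse of `Ainv σ φ (2 * a) (2 * b)`, where
`ψ = φ * exp σ`. -/
noncomputable def perturbedForm (σ ψ : ℂ → ℝ) (a b : ℝ) (z : ℂ) : Fin 2 → ℝ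
  | 0 => (-2 * b * pd 0 ψ z + a * pd 1 ψ z - a * b * ψ z * pd 0 ψ z / (1 - a * ψ z) -
      b * ψ z * logFactorDeriv σ ψ a b 0 z - (1 - a * ψ z) * logFactorDeriv σ ψ a b 1 z) /
      (2 * √(1 - (a ^ 2 + b ^ 2) * ψ z ^ 2))
  | 1 => (a * pd 0 ψ z - a * b * ψ z * pd 1 ψ z / (1 - a * ψ z) +
      (1 + a * ψ z) * logFactorDeriv σ ψ a b 0 z + b * ψ z * logFactorDeriv σ ψ a b 1 z) /
      (2 * √(1 - (a ^ 2 + b ^ 2) * ψ z ^ 2))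

lemma connectionForm_flatPerturbation_zero (hψ : DifferentiableAt ℝ ψ z)
    (hg : IsRiemannianAt (flatPerturbation a b ψ) z) :
    connectionForm (flatPerturbation a b ψ) 0 z =
      (-2 * b * pd 0 ψ z + a * pd 1 ψ z - a * b * ψ z * pd 0 ψ z / (1 - a * ψ z)) /
        (2 * √(1 - (a ^ 2 + b ^ 2) * ψ z ^ 2)) := by
  rw [hg.connectionForm_eq, det_flatPerturbation]
  simp (disch := fun_prop) only [flatPerturbation, Matrix.of_apply, Matrix.cons_val',
    Matrix.cons_val_zero, Matrix.cons_val_one, Matrix.cons_val_fin_one, pd_sub, pd_neg, pd_const,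
    pd_const_mul]
  ring

lemma connectionForm_flatPerturbation_one (hψ : DifferentiableAt ℝ ψ z)
    (hg : IsRiemannianAt (flatPerturbation a b ψ) z) :
    connectionForm (flatPerturbation a b ψ) 1 z =
      (a * pd 0 ψ z - a * b * ψ z * pd 1 ψ z / (1 - a * ψ z)) /
        (2 * √(1 - (a ^ 2 + b ^ 2) * ψ z ^ 2)) := by
  rw [hg.connectionForm_eq, det_flatPerturbation]
  simp (disch := fun_prop) only [flatPerturbation, Matrix.of_apply, Matrix.cons_val',
    Matrix.cons_val_zero, Matrix.cons_val_one, Matrix.cons_val_fin_one, pd_sub, pd_add, pd_neg,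
    pd_const, pd_const_mul]
  ring

lemma pd_exp_div_det (hσ : DifferentiableAt ℝ σ z) (hψ : DifferentiableAt ℝ ψ z)
    (hdet : 1 - (a ^ 2 + b ^ 2) * ψ z ^ 2 ≠ 0) (i : Fin 2) :
    pd i (fun w => Real.exp (σ w) / (flatPerturbation a b ψ w).det) z =
      Real.exp (σ z) / (flatPerturbation a b ψ z).det * logFactorDeriv σ ψ a b i z := by
  simp only [det_flatPerturbation, logFactorDeriv]
  have hsq : pd i (fun w => ψ w ^ 2) z = 2 * ψ z * pd i ψ z := by
    simpa using pd_comp (hasDerivAt_pow 2 (ψ z)) hψ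
  rw [pd_div (by fun_prop) (by fun_prop) hdet, pd_comp (Real.hasDerivAt_exp _) hσ,
    pd_sub (by fun_prop) (by fun_prop), pd_const, pd_const_mul _ (by fun_prop), hsq]
  field_simp
  ring

lemma connectionForm_inv_Ainv (hσ : ContDiffAt ℝ 2 σ z) (hφ : ContDiffAt ℝ 2 φ z)
    (hg : IsRiemannianAt (flatPerturbation a b fun w => φ w * Real.exp (σ w)) z) (i : Fin 2) :
    connectionForm (fun w => (Ainv σ φ (2 * a) (2 * b) w)⁻¹) i z =
      perturbedForm σ (fun w => φ w * Real.exp (σ w)) a b z i := by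
  simp only [inv_Ainv]
  set ψ : ℂ → ℝ := fun w => φ w * Real.exp (σ w)
  have hσ' := hσ.differentiableAt two_ne_zero
  have hψ : DifferentiableAt ℝ ψ z := (hφ.mul hσ.exp).differentiableAt two_ne_zero
  have hdet := hg.det_pos.ne'
  have hexp := Real.exp_ne_zero (σ z)
  have hdet' : 1 - (a ^ 2 + b ^ 2) * ψ z ^ 2 ≠ 0 := det_flatPerturbation a b ψ z ▸ hdet
  have hρ : ContDiffAt ℝ 2 (fun w => Real.exp (σ w) / (flatPerturbation a b ψ w).det) z :=
    hσ.exp.div hg.contDiffAt_det hdet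
  rw [hg.connectionForm_smul hρ (div_pos (Real.exp_pos (σ z)) hg.det_pos),
    pd_exp_div_det hσ' hψ hdet', pd_exp_div_det hσ' hψ hdet']
  have hcancel (u v S T : ℝ) {ρ : ℝ} (hρ : ρ ≠ 0) :
      (u * (ρ * S) - v * (ρ * T)) / (2 * √(flatPerturbation a b ψ z).det * ρ) =
        (u * S - v * T) / (2 * √(flatPerturbation a b ψ z).det) := by
    rw [mul_left_comm u, mul_left_comm v, ← mul_sub, mul_comm ρ, mul_div_mul_right _ _ hρ]
  rw [hcancel _ _ _ _ (div_ne_zero hexp hdet), det_flatPerturbation]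
  fin_cases i
  · rw [Fin.zero_eta, connectionForm_flatPerturbation_zero hψ hg, perturbedForm]
    simp only [flatPerturbation, Matrix.of_apply, Matrix.cons_val', Matrix.cons_val_zero,
      Matrix.cons_val_one, Matrix.cons_val_fin_one]
    ring
  · rw [Fin.mk_one, connectionForm_flatPerturbation_one hψ hg, perturbedForm]
    simp only [flatPerturbation, Matrix.of_apply, Matrix.cons_val', Matrix.cons_val_zero,
      Matrix.cons_val_one, Matrix.cons_val_fin_one]
    ring

end PerturbedMetric

section FirstVariation

variable {σ ψ : ℂ → ℝ} {a b : ℝ} {z : ℂ}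

lemma contDiffAt_perturbedForm (hσ : ContDiffAt ℝ 2 σ z) (hψ : ContDiffAt ℝ 2 ψ z) (a b : ℝ)
    (i : Fin 2) : ContDiffAt ℝ 1
      (fun p : ℝ × ℂ => perturbedForm σ ψ (p.1 * a) (p.1 * b) p.2 i) (0, z) := by
  have hψ₁ := hψ.of_le one_le_two
  have hσpd (j : Fin 2) : ContDiffAt ℝ 1 (pd j σ) z := contDiffAt_pd hσ (by norm_num)
  have hψpd (j : Fin 2) : ContDiffAt ℝ 1 (pd j ψ) z := contDiffAt_pd hψ (by norm_num)
  have hlog (j : Fin 2) : ContDiffAt ℝ 1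
      (fun p : ℝ × ℂ => logFactorDeriv σ ψ (p.1 * a) (p.1 * b) j p.2) (0, z) := by
    unfold logFactorDeriv
    fun_prop (disch := simp)
  fin_cases i <;> dsimp only [Fin.zero_eta, Fin.mk_one, perturbedForm] <;>
    fun_prop (disch := simp)

lemma hasDerivAt_sq_add_sq (a b : ℝ) :
    HasDerivAt (fun t : ℝ => (t * a) ^ 2 + (t * b) ^ 2) 0 0 := by
  simpa using ((hasDerivAt_mul_const (x := 0) a).fun_pow 2).fun_add
    ((hasDerivAt_mul_const b).fun_pow 2)

lemma hasDerivAt_logFactorDeriv (σ ψ : ℂ → ℝ) (a b : ℝ) (i : Fin 2) (z : ℂ) :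
    HasDerivAt (fun t => logFactorDeriv σ ψ (t * a) (t * b) i z) 0 0 := by
  have hq := hasDerivAt_sq_add_sq a b
  have hnum := ((hq.const_mul 2).mul_const (ψ z)).mul_const (pd i ψ z)
  have hdet := (hq.mul_const (ψ z ^ 2)).const_sub 1
  simpa [logFactorDeriv] using hnum.fun_div hdet (by simp)

lemma hasDerivAt_two_mul_sqrt (a b c : ℝ) :
    HasDerivAt (fun t : ℝ => 2 * √(1 - ((t * a) ^ 2 + (t * b) ^ 2) * c)) 0 0 := by
  simpa using ((((hasDerivAt_sq_add_sq a b).mul_const c).const_sub 1).sqrt (by simp)).const_mul 2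

lemma hasDerivAt_perturbedForm_zero (σ ψ : ℂ → ℝ) (a b : ℝ) (z : ℂ) :
    HasDerivAt (fun t => perturbedForm σ ψ (t * a) (t * b) z 0)
      ((-2 * b * pd 0 ψ z + a * pd 1 ψ z - b * ψ z * pd 0 σ z + a * ψ z * pd 1 σ z) / 2) 0 := by
  have ha : HasDerivAt (fun t : ℝ => t * a) a 0 := hasDerivAt_mul_const a
  have hb : HasDerivAt (fun t : ℝ => t * b) b 0 := hasDerivAt_mul_const b
  have hg₀ := (ha.mul_const (ψ z)).const_sub 1
  have hlog := hasDerivAt_logFactorDeriv σ ψ a b (z := z)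
  have hnum := (((((hb.const_mul (-2)).mul_const (pd 0 ψ z)).add (ha.mul_const (pd 1 ψ z))).sub
    ((((ha.mul hb).mul_const (ψ z)).mul_const (pd 0 ψ z)).fun_div hg₀ (by simp))).sub
    ((hb.mul_const (ψ z)).mul (hlog 0))).sub (hg₀.mul (hlog 1))
  refine (hnum.fun_div (hasDerivAt_two_mul_sqrt a b (ψ z ^ 2)) (by simp)).congr_deriv ?_
  simp only [logFactorDeriv, Pi.mul_apply, Pi.add_apply, Pi.sub_apply, zero_mul, mul_zero, one_pow,
    zero_pow two_ne_zero, add_zero, sub_zero, div_one, mul_one, Real.sqrt_one]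
  ring

lemma hasDerivAt_perturbedForm_one (σ ψ : ℂ → ℝ) (a b : ℝ) (z : ℂ) :
    HasDerivAt (fun t => perturbedForm σ ψ (t * a) (t * b) z 1)
      ((a * pd 0 ψ z + a * ψ z * pd 0 σ z + b * ψ z * pd 1 σ z) / 2) 0 := by
  have ha : HasDerivAt (fun t : ℝ => t * a) a 0 := hasDerivAt_mul_const a
  have hb : HasDerivAt (fun t : ℝ => t * b) b 0 := hasDerivAt_mul_const b
  have hg₀ := (ha.mul_const (ψ z)).const_sub 1
  have hlog := hasDerivAt_logFactorDeriv σ ψ a b (z := z)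
  have hnum := (((ha.mul_const (pd 0 ψ z)).sub
    ((((ha.mul hb).mul_const (ψ z)).mul_const (pd 1 ψ z)).fun_div hg₀ (by simp))).add
    (((ha.mul_const (ψ z)).const_add 1).mul (hlog 0))).add ((hb.mul_const (ψ z)).mul (hlog 1))
  refine (hnum.fun_div (hasDerivAt_two_mul_sqrt a b (ψ z ^ 2)) (by simp)).congr_deriv ?_
  simp only [logFactorDeriv, Pi.mul_apply, Pi.add_apply, Pi.sub_apply, zero_mul, mul_zero, one_pow,
    zero_pow two_ne_zero, add_zero, sub_zero, div_one, mul_one, Real.sqrt_one]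
  ring

lemma eventually_isRiemannianAt_flatPerturbation (hψ : ContDiff ℝ 2 ψ) {S : Set ℂ}
    (hS : IsCompact S) (a b : ℝ) :
    ∀ᶠ t : ℝ in 𝓝 0, ∀ z ∈ S, IsRiemannianAt (flatPerturbation (t * a) (t * b) ψ) z := by
  have hψc := hψ.continuous
  refine hS.eventually_forall_of_forall_eventually fun z _ => ?_
  have hpos : ∀ᶠ p : ℝ × ℂ in 𝓝 (0, z), p.1 * a * ψ p.2 < 1 :=
    ContinuousAt.eventually_lt (by fun_prop) continuousAt_const (by simp)
  have hdet : ∀ᶠ p : ℝ × ℂ in 𝓝 (0, z),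
      0 < 1 - ((p.1 * a) ^ 2 + (p.1 * b) ^ 2) * ψ p.2 ^ 2 :=
    ContinuousAt.eventually_lt continuousAt_const (by fun_prop) (by simp)
  filter_upwards [hpos, hdet] with p hp hd
  exact isRiemannianAt_flatPerturbation hψ.contDiffAt hp (by rwa [det_flatPerturbation])

lemma IsRiemannianAt.inv_Ainv {φ : ℂ → ℝ} (hσ : ContDiffAt ℝ 2 σ z)
    (hg : IsRiemannianAt (flatPerturbation a b fun w => φ w * Real.exp (σ w)) z) :
    IsRiemannianAt (fun w => (Ainv σ φ (2 * a) (2 * b) w)⁻¹) z := by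
  simp only [_root_.inv_Ainv]
  exact hg.smul (hσ.exp.div hg.contDiffAt_det hg.det_pos.ne')
    (div_pos (Real.exp_pos _) hg.det_pos)

lemma hasDerivAt_integral_scalarCurv {σ φ h : ℂ → ℝ} (hσ : ContDiff ℝ 2 σ)
    (hφ : ContDiff ℝ 2 φ) (hh : ContDiff ℝ 2 h) (hhs : HasCompactSupport h) (a b : ℝ) :
    let ψ := fun w => φ w * Real.exp (σ w)
    HasDerivAt (fun t : ℝ => ∫ z, h z *
        scalarCurv (fun w => (Ainv σ φ (2 * (t * a)) (2 * (t * b)) w)⁻¹) z *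
        √((Ainv σ φ (2 * (t * a)) (2 * (t * b)) z)⁻¹).det)
      (∫ z, (pd 0 h z * (a * pd 0 ψ z + a * ψ z * pd 0 σ z + b * ψ z * pd 1 σ z) - pd 1 h z *
        (-2 * b * pd 0 ψ z + a * pd 1 ψ z - b * ψ z * pd 0 σ z + a * ψ z * pd 1 σ z))) 0 := by
  intro ψ
  have hψ : ContDiff ℝ 2 ψ := hφ.mul hσ.exp
  have hoff {i : Fin 2} {z : ℂ} (hz : z ∉ tsupport h) : pd i h z = 0 :=
    image_eq_zero_of_notMem_tsupport fun hz' => hz (tsupport_pd_subset hz')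
  set K : ℝ × ℂ → ℝ := fun p => 2 * (pd 0 h p.2 * perturbedForm σ ψ (p.1 * a) (p.1 * b) p.2 1 -
    pd 1 h p.2 * perturbedForm σ ψ (p.1 * a) (p.1 * b) p.2 0) with hKdef
  have hK (z : ℂ) : ContDiffAt ℝ 1 K (0, z) := by
    have hform := contDiffAt_perturbedForm (z := z) hσ.contDiffAt hψ.contDiffAt a b
    have hpd (i : Fin 2) : ContDiffAt ℝ 1 (pd i h) z :=
      (contDiff_pd hh (by norm_num)).contDiffAt
    fun_prop
  have hderiv := hasDerivAt_setIntegral_of_contDiffAt (μ := volume) hhs (fun z _ => hK z) fun z _ =>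
    (((hasDerivAt_perturbedForm_one σ ψ a b z).const_mul (pd 0 h z)).sub
      ((hasDerivAt_perturbedForm_zero σ ψ a b z).const_mul (pd 1 h z))).const_mul 2
  rw [setIntegral_eq_integral_of_forall_compl_eq_zero fun z hz => by simp [hoff hz]] at hderiv
  refine (hderiv.congr_of_eventuallyEq ?_).congr_deriv <| by
    congr 1 with z
    ring
  filter_upwards [eventually_isRiemannianAt_flatPerturbation hψ hhs a b] with t ht
  rw [integral_mul_scalarCurv (hh.of_le one_le_two) hhs fun z hz =>
      (ht z hz).inv_Ainv hσ.contDiffAt,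
    ← setIntegral_eq_integral_of_forall_compl_eq_zero (s := tsupport h) fun z hz => by
      simp [hoff hz]]
  refine setIntegral_congr_fun (isClosed_tsupport h).measurableSet fun z hz => ?_
  simp only [connectionForm_inv_Ainv hσ.contDiffAt hφ.contDiffAt (ht z hz), hKdef, ψ]

lemma integral_connectionForm_variation {σ ψ h : ℂ → ℝ} (hσ : ContDiff ℝ 1 σ) (hψ : ContDiff ℝ 1 ψ)
    (hh : ContDiff ℝ 2 h) (hhs : HasCompactSupport h) (a b : ℝ) :
    ∫ z, (pd 0 h z * (a * pd 0 ψ z + a * ψ z * pd 0 σ z + b * ψ z * pd 1 σ z) - pd 1 h z *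
        (-2 * b * pd 0 ψ z + a * pd 1 ψ z - b * ψ z * pd 0 σ z + a * ψ z * pd 1 σ z)) =
      ∫ z, ψ z * (a * (-(pd 0 (pd 0 h) z - pd 1 (pd 1 h) z) +
          (pd 0 σ z * pd 0 h z - pd 1 σ z * pd 1 h z)) +
        b * (-2 * pd 0 (pd 1 h) z + (pd 0 σ z * pd 1 h z + pd 1 σ z * pd 0 h z))) := by
  have hpdh (j : Fin 2) : ContDiff ℝ 1 (pd j h) := contDiff_pd hh (by norm_num)
  have hpdhs (j : Fin 2) : HasCompactSupport (pd j h) := hasCompactSupport_pd hhs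
  have hpdσ (j : Fin 2) : Continuous (pd j σ) := continuous_pd hσ
  have hpdψ (j : Fin 2) : Continuous (pd j ψ) := continuous_pd hψ
  have hψc := hψ.continuous
  have hint {V : ℂ → ℝ} (j : Fin 2) (hV : Continuous V) : Integrable fun z => pd j h z * V z :=
    integrable_mul_of_hasCompactSupport (hpdh j).continuous (hpdhs j) hV.continuousOn
  set D : Fin 2 → Fin 2 → ℂ → ℝ := fun i j z => pd j h z * pd i ψ z + pd i (pd j h) z * ψ z
    with hD
  have hDint (i j : Fin 2) : Integrable (D i j) :=
    integrable_mul_pd_add_pd_mul i (hpdh j) (hpdhs j) hψ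
  have hD₀ (i j : Fin 2) : ∫ z, D i j z = 0 :=
    integral_mul_pd_add_pd_mul i (hpdh j) (hpdhs j) hψ
  have hdiag : Integrable fun z => a * (D 0 0 z - D 1 1 z) :=
    ((hDint 0 0).sub (hDint 1 1)).const_mul a
  have hmixed : Integrable fun z => 2 * b * D 0 1 z := (hDint 0 1).const_mul (2 * b)
  have hdiv : ∫ z, (a * (D 0 0 z - D 1 1 z) + 2 * b * D 0 1 z) = 0 := by
    rw [integral_add hdiag hmixed, integral_const_mul, integral_const_mul,
      integral_sub (hDint 0 0) (hDint 1 1)]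
    simp only [hD₀, sub_zero, mul_zero, add_zero]
  rw [← sub_zero (integral _ _), ← hdiv]
  refine (integral_sub ((hint 0 ?_).sub (hint 1 ?_)) (hdiag.add hmixed)).symm.trans ?_
  · fun_prop
  · fun_prop
  congr 1 with z
  simp only [hD, Pi.sub_apply, Pi.add_apply]
  ring

end FirstVariation

section Wirtinger

variable {z : ℂ}

lemma contDiff_wz {m n : WithTop ℕ∞} {f : ℂ → ℂ} (hf : ContDiff ℝ n f) (hmn : m + 1 ≤ n) :
    ContDiff ℝ m (wz f) := by
  have hpd (v : ℂ) : ContDiff ℝ m fun z => fderiv ℝ f z v :=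
    (hf.fderiv_right hmn).clm_apply contDiff_const
  exact ((hpd 1).sub (contDiff_const.mul (hpd Complex.I))).div_const 2

lemma hasCompactSupport_wz {f : ℂ → ℂ} (hf : HasCompactSupport f) : HasCompactSupport (wz f) :=
  .intro hf fun z hz => by
    simp only [wz, fderiv_of_notMem_tsupport ℝ hz, zero_apply, mul_zero, sub_zero, zero_div]

lemma wz_ofReal {f : ℂ → ℝ} (hf : DifferentiableAt ℝ f z) :
    wz (fun w => (f w : ℂ)) z = ((pd 0 f z : ℂ) - Complex.I * pd 1 f z) / 2 := by
  have h : HasFDerivAt (fun w => (f w : ℂ)) (Complex.ofRealCLM ∘L fderiv ℝ f z) z :=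
    Complex.ofRealCLM.hasFDerivAt.comp z hf.hasFDerivAt
  simp [wz, pd, h.fderiv]

lemma wz_sub {f g : ℂ → ℂ} (hf : DifferentiableAt ℝ f z) (hg : DifferentiableAt ℝ g z) :
    wz (fun w => f w - g w) z = wz f z - wz g z := by
  simp only [wz, fderiv_fun_sub hf hg, sub_apply]
  ring

lemma wz_const_mul (c : ℂ) {f : ℂ → ℂ} (hf : DifferentiableAt ℝ f z) :
    wz (fun w => c * f w) z = c * wz f z := by
  simp only [wz, fderiv_const_mul hf, smul_apply, smul_eq_mul]
  ring

lemma wz_wz_ofReal {h : ℂ → ℝ} (hh : ContDiff ℝ 2 h) :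
    wz (wz fun w => (h w : ℂ)) z = ((pd 0 (pd 0 h) z : ℂ) - pd 1 (pd 1 h) z -
      2 * Complex.I * pd 0 (pd 1 h) z) / 4 := by
  have hpd (i : Fin 2) : Differentiable ℝ (pd i h) :=
    (contDiff_pd (m := 1) hh (by norm_num)).differentiable one_ne_zero
  have hpdc (i : Fin 2) : DifferentiableAt ℝ (fun w => (pd i h w : ℂ)) z :=
    Complex.ofRealCLM.differentiableAt.comp z (hpd i z)
  have hwz : (wz fun w => (h w : ℂ)) =
      fun w => 1 / 2 * (pd 0 h w : ℂ) - Complex.I / 2 * (pd 1 h w : ℂ) := by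
    ext w
    rw [wz_ofReal (hh.differentiable two_ne_zero w)]
    ring
  rw [hwz, wz_sub ((hpdc 0).const_mul _) ((hpdc 1).const_mul _), wz_const_mul _ (hpdc 0),
    wz_const_mul _ (hpdc 1), wz_ofReal (hpd 0 z), wz_ofReal (hpd 1 z),
    pd_comm (i := 1) (j := 0) hh.contDiffAt]
  linear_combination (pd 1 (pd 1 h) z : ℂ) / 4 * Complex.I_mul_I

lemma four_mul_re_wz {σ h : ℂ → ℝ} (hσ : DifferentiableAt ℝ σ z) (hh : ContDiff ℝ 2 h) (a b : ℝ) :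
    4 * ((a + b * Complex.I) * (-wz (wz fun w => (h w : ℂ)) z +
      wz (fun w => (σ w : ℂ)) z * wz (fun w => (h w : ℂ)) z)).re =
    a * (-(pd 0 (pd 0 h) z - pd 1 (pd 1 h) z) + (pd 0 σ z * pd 0 h z - pd 1 σ z * pd 1 h z)) +
      b * (-2 * pd 0 (pd 1 h) z + (pd 0 σ z * pd 1 h z + pd 1 σ z * pd 0 h z)) := by
  rw [wz_wz_ofReal hh, wz_ofReal hσ, wz_ofReal (hh.differentiable two_ne_zero z)]
  simp only [Complex.mul_re, Complex.mul_im, Complex.add_re, Complex.add_im, Complex.sub_re,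
    Complex.sub_im, Complex.neg_re, Complex.neg_im, Complex.div_ofNat_re, Complex.div_ofNat_im,
    Complex.ofReal_re, Complex.ofReal_im, Complex.I_re, Complex.I_im, Complex.re_ofNat,
    Complex.im_ofNat]
  ring

end Wirtinger

section CurvatureVariation

variable {σ φ h : ℂ → ℝ}

lemma integrable_wz_mul (hσ : ContDiff ℝ 1 σ) (hφ : Continuous φ) (hh : ContDiff ℝ 2 h)
    (hhs : HasCompactSupport h) :
    Integrable fun z => (-wz (wz fun w => (h w : ℂ)) z +
      wz (fun w => (σ w : ℂ)) z * wz (fun w => (h w : ℂ)) z) * φ z * Real.exp (σ z) := by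
  have hσwz : ContDiff ℝ 0 (wz fun w => (σ w : ℂ)) :=
    contDiff_wz (Complex.ofRealCLM.contDiff.comp hσ) (by norm_num)
  have hhwz : ContDiff ℝ 1 (wz fun w => (h w : ℂ)) :=
    contDiff_wz (Complex.ofRealCLM.contDiff.comp hh) (by norm_num)
  have hhwz₂ : ContDiff ℝ 0 (wz (wz fun w => (h w : ℂ))) := contDiff_wz hhwz (by norm_num)
  have hhwzs : HasCompactSupport (wz fun w => (h w : ℂ)) :=
    hasCompactSupport_wz (hhs.comp_left Complex.ofReal_zero)
  have hcont := hσ.continuous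
  have hσwzc := hσwz.continuous
  have hhwzc := hhwz.continuous
  have hhwz₂c := hhwz₂.continuous
  refine Continuous.integrable_of_hasCompactSupport (by fun_prop) ?_
  exact (((hasCompactSupport_wz hhwzs).neg.add hhwzs.mul_left).mul_right).mul_right

theorem hasDerivAt_integral_scalarCurv_wz (hσ : ContDiff ℝ 2 σ) (hφ : ContDiff ℝ 2 φ)
    (hh : ContDiff ℝ 2 h) (hhs : HasCompactSupport h) (a b : ℝ) :
    HasDerivAt (fun t : ℝ => ∫ z, h z *
        scalarCurv (fun w => (Ainv σ φ (2 * (t * a)) (2 * (t * b)) w)⁻¹) z *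
        √((Ainv σ φ (2 * (t * a)) (2 * (t * b)) z)⁻¹).det)
      (4 * ((a + b * Complex.I) * ∫ z, (-wz (wz fun w => (h w : ℂ)) z +
        wz (fun w => (σ w : ℂ)) z * wz (fun w => (h w : ℂ)) z) * φ z * Real.exp (σ z)).re) 0 := by
  have hQ := (integrable_wz_mul (hσ.of_le one_le_two) hφ.continuous hh hhs).const_mul
    (a + b * Complex.I)
  refine (hasDerivAt_integral_scalarCurv hσ hφ hh hhs a b).congr_deriv ?_
  rw [integral_connectionForm_variation (hσ.of_le one_le_two)
      ((hφ.mul hσ.exp).of_le one_le_two) hh hhs,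
    ← integral_const_mul, ← Complex.reCLM_apply, ← Complex.reCLM.integral_comp_comm hQ,
    ← integral_const_mul]
  congr 1 with z
  rw [← four_mul_re_wz (hσ.differentiable two_ne_zero z) hh, Complex.reCLM_apply,
    mul_assoc _ (φ z : ℂ), ← mul_assoc (_ + _), ← Complex.ofReal_mul, Complex.re_mul_ofReal]
  ring

end CurvatureVariation

theorem stmt13_general (σ φ h : ℂ → ℝ) (hσ : ContDiff ℝ 2 σ) (hφ : ContDiff ℝ 2 φ)
    (hh : ContDiff ℝ 2 h) (hhs : HasCompactSupport h) (F : ℝ → ℝ → ℝ)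
    (hF : ∀ ε₁ ε₂ : ℝ, F ε₁ ε₂ =
      ∫ z : ℂ, h z * scalarCurv (fun w => (Ainv σ φ ε₁ ε₂ w)⁻¹) z *
        Real.sqrt (((Ainv σ φ ε₁ ε₂ z)⁻¹ : Matrix (Fin 2) (Fin 2) ℝ).det)) :
    (1/2 : ℂ) * ((deriv (fun t : ℝ => ((F t 0 : ℝ) : ℂ)) 0) -
        Complex.I * (deriv (fun t : ℝ => ((F 0 t : ℝ) : ℂ)) 0)) =
      ∫ z : ℂ, (-(wz (wz (fun w => (h w : ℂ))) z) +
        wz (fun w => (σ w : ℂ)) z * wz (fun w => (h w : ℂ)) z) *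
          (φ z : ℂ) * (Real.exp (σ z) : ℂ) := by
  set I := ∫ z : ℂ, (-(wz (wz (fun w => (h w : ℂ))) z) +
    wz (fun w => (σ w : ℂ)) z * wz (fun w => (h w : ℂ)) z) * (φ z : ℂ) * (Real.exp (σ z) : ℂ)
  have hderiv (a b : ℝ) : HasDerivAt (fun t => F (2 * (t * a)) (2 * (t * b)))
      (4 * (a * I.re - b * I.im)) 0 := by
    have hre : ((a + b * Complex.I) * I).re = a * I.re - b * I.im := by simp
    simpa only [hF, ← hre] using hasDerivAt_integral_scalarCurv_wz hσ hφ hh hhs a b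
  have htwo (t : ℝ) : 2 * (t * 2⁻¹) = t := by ring
  have h₁ : HasDerivAt (fun t => F t 0) (2 * I.re) 0 := by
    simpa only [htwo, mul_zero] using (hderiv 2⁻¹ 0).congr_deriv (by ring)
  have h₂ : HasDerivAt (fun t => F 0 t) (-2 * I.im) 0 := by
    simpa only [htwo, mul_zero] using (hderiv 0 2⁻¹).congr_deriv (by ring)
  rw [h₁.ofReal_comp.deriv, h₂.ofReal_comp.deriv]
  apply Complex.ext <;> simp

/-- Variation of the curvature functional F(ε) = ∫ h R_{g_ε} dv_{g_ε},
where the perturbed metric g_ε is defined by its inverse components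
g_ε^{zz̄} = 2e^{−σ}, g_ε^{zz} = εφ: the holomorphic derivative
∂_ε F|₀ = ½(∂_{ε₁} − i∂_{ε₂})F|₀ equals ∫ (−∂_z²h + ∂_zσ ∂_z h) φ e^σ d²z. -/
theorem stmt13 (σ φ h : ℂ → ℝ) (hσ : ContDiff ℝ (⊤ : ℕ∞) σ)
    (hφ : ContDiff ℝ (⊤ : ℕ∞) φ) (hφs : HasCompactSupport φ)
    (hh : ContDiff ℝ (⊤ : ℕ∞) h) (hhs : HasCompactSupport h)
    (F : ℝ → ℝ → ℝ)
    (hF : ∀ ε₁ ε₂ : ℝ, F ε₁ ε₂ =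
      ∫ z : ℂ, h z * scalarCurv (fun w => (Ainv σ φ ε₁ ε₂ w)⁻¹) z *
        Real.sqrt (((Ainv σ φ ε₁ ε₂ z)⁻¹ : Matrix (Fin 2) (Fin 2) ℝ).det)) :
    (1/2 : ℂ) * ((deriv (fun t : ℝ => ((F t 0 : ℝ) : ℂ)) 0) -
        Complex.I * (deriv (fun t : ℝ => ((F 0 t : ℝ) : ℂ)) 0)) =
      ∫ z : ℂ, (-(wz (wz (fun w => (h w : ℂ))) z) +
        wz (fun w => (σ w : ℂ)) z * wz (fun w => (h w : ℂ)) z) *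
          (φ z : ℂ) * (Real.exp (σ z) : ℂ) := by
  have htwo : (2 : WithTop ℕ∞) ≤ (⊤ : ℕ∞) := by norm_cast
  exact stmt13_general σ φ h (hσ.of_le htwo) (hφ.of_le htwo) (hh.of_le htwo) hhs F hF
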